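/- Let K be a field, m ∈ ℕ, μ : Fin m → ℤ, and C = (Fin m → K) with standard basis (f_1, …, f_m). Suppose d : C →ₗ[K] C satisfies: the coefficient of f_j in d(f_i) is nonzero only if i < j and μ(j) = μ(i) − 1. Suppose there exist an automorphism φ of C of the triangular form φ(f_i) = f_i + Σ_{j > i, μ(j) = μ(i)} c_{ij} f_j, a fixed-point-free involution ρ of Fin m, and units u_i ∈ Kˣ such that for all i < ρ(i): (φ⁻¹ ∘ d ∘ φ)(f_i) = u_i f_{ρ(i)} and (φ⁻¹ ∘ d ∘ φ)(f_{ρ(i)}) = 0. Let τ : Fin m → Kˣ and let T be the diagonal automorphism T(f_i) = τ_i · f_i. Then d' = T⁻¹ ∘ d ∘ T satisfies the same triangularity condition, φ' = T⁻¹ ∘ φ ∘ T again has the triangular form f_i + Σ_{j > i, μ(j) = μ(i)} c'_{ij} f_j, and for all i < ρ(i): (φ'⁻¹ ∘ d' ∘ φ')(f_i) = (τ_i · u_i · τ_{ρ(i)}⁻¹) · f_{ρ(i)} and (φ'⁻¹ ∘ d' ∘ φ')(f_{ρ(i)}) = 0. In particular d' has the same Barannikov involution ρ, with units τ_i u_i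 τ_{ρ(i)}⁻¹. -/

import Mathlib

/-!
Conjugation by `T = diag(τ)` is an algebra automorphism of the endomorphisms of `K^m`, and on
matrix entries it only rescales: the `(j, i)` entry is multiplied by `τ_j⁻¹ τ_i`
(`conjDiag_single_apply`). Since these factors are nonzero, supports of matrices are preserved, and
since they are `1` on the diagonal, so is unipotence. Moreover `φ'⁻¹ d' φ'` is the
`T`-conjugate of `φ⁻¹ d φ` (`conjDiagEquiv_symm_comp_conjDiag_comp`), so the entry `u_i` of the
normal form at `(ρ i, i)` becomes `τ_i u_i τ_{ρ i}⁻¹`.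
-/

/-- A linear endomorphism `φ` of `Fin m → K` has the unipotent triangular form
`φ(f_i) = f_i + Σ_{j > i, μ j = μ i} c_{ij} f_j` with respect to the standard basis `f_i`. -/
def UnipotentTriangular {K : Type*} [Field K] {m : ℕ} (μ : Fin m → ℤ)
    (φ : (Fin m → K) →ₗ[K] (Fin m → K)) : Prop :=
  ∀ i : Fin m, φ (Pi.single i 1) i = 1 ∧
    ∀ j : Fin m, j ≠ i → φ (Pi.single i 1) j ≠ 0 → i < j ∧ μ j = μ i

/-- The diagonal linear automorphism `T(f_i) = τ_i • f_i` of `Fin m → K`. -/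
def diagEquiv {K : Type*} [Field K] {m : ℕ} (τ : Fin m → Kˣ) :
    (Fin m → K) ≃ₗ[K] (Fin m → K) :=
  LinearEquiv.piCongrRight fun i => LinearEquiv.smulOfUnit (τ i)

/-- Conjugation of a linear endomorphism by the diagonal automorphism:
`d' = T⁻¹ ∘ d ∘ T`. -/
def conjDiag {K : Type*} [Field K] {m : ℕ} (τ : Fin m → Kˣ)
    (f : (Fin m → K) →ₗ[K] (Fin m → K)) : (Fin m → K) →ₗ[K] (Fin m → K) :=
  (diagEquiv τ).symm.toLinearMap ∘ₗ f ∘ₗ (diagEquiv τ).toLinearMap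

/-- Conjugation of a linear automorphism by the diagonal automorphism:
`φ' = T⁻¹ ∘ φ ∘ T`. -/
def conjDiagEquiv {K : Type*} [Field K] {m : ℕ} (τ : Fin m → Kˣ)
    (φ : (Fin m → K) ≃ₗ[K] (Fin m → K)) : (Fin m → K) ≃ₗ[K] (Fin m → K) :=
  (diagEquiv τ).trans (φ.trans (diagEquiv τ).symm)

theorem conjDiag_single_apply {K : Type*} [Field K] {m : ℕ} (τ : Fin m → Kˣ)
    (f : (Fin m → K) →ₗ[K] (Fin m → K)) (i j : Fin m) :
    conjDiag τ f (Pi.single i 1) j = ((τ j)⁻¹ : Kˣ) * (τ i * f (Pi.single i 1) j) := by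
  have hT : diagEquiv τ (Pi.single i 1) = (τ i : K) • (Pi.single i 1 : Fin m → K) := by
    ext k
    change (τ k : K) * (Pi.single i 1 : Fin m → K) k = τ i * (Pi.single i 1 : Fin m → K) k
    by_cases h : k = i
    · rw [h]
    · simp [h]
  change ((τ j)⁻¹ : Kˣ) * f (diagEquiv τ (Pi.single i 1)) j = _
  rw [hT, map_smul]
  rfl

theorem conjDiagEquiv_symm_comp_conjDiag_comp {K : Type*} [Field K] {m : ℕ} (τ : Fin m → Kˣ)
    (φ : (Fin m → K) ≃ₗ[K] (Fin m → K)) (d : (Fin m → K) →ₗ[K] (Fin m → K)) :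
    (conjDiagEquiv τ φ).symm.toLinearMap ∘ₗ conjDiag τ d ∘ₗ (conjDiagEquiv τ φ).toLinearMap
      = conjDiag τ (φ.symm.toLinearMap ∘ₗ d ∘ₗ φ.toLinearMap) := by
  apply LinearMap.ext
  intro x
  simp [conjDiagEquiv, conjDiag]

/-- If `d` is strictly triangular relative to the Maslov potential `μ` and admits a Barannikov
normal form with unipotent triangular change of basis `φ`, fixed-point-free involution `ρ` and
units `u_i`, then conjugating by the diagonal automorphism `T(f_i) = τ_i f_i` produces
`d' = T⁻¹ d T` which is again strictly triangular, `φ' = T⁻¹ φ T` which is again unipotent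
triangular, and the Barannikov data of `d'` is the same involution `ρ` with units
`τ_i * u_i * τ_{ρ i}⁻¹`. -/
theorem barannikov_data_of_diag_conjugate {K : Type*} [Field K] {m : ℕ} (μ : Fin m → ℤ)
    (d : (Fin m → K) →ₗ[K] (Fin m → K))
    (htri : ∀ i j : Fin m, d (Pi.single i 1) j ≠ 0 → i < j ∧ μ j = μ i - 1)
    (φ : (Fin m → K) ≃ₗ[K] (Fin m → K)) (hφ : UnipotentTriangular μ φ.toLinearMap)
    (ρ : Fin m → Fin m) (hinv : Function.Involutive ρ) (hfpf : ∀ i, ρ i ≠ i)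
    (u : Fin m → Kˣ)
    (hnorm : ∀ i : Fin m, i < ρ i →
      (φ.symm.toLinearMap ∘ₗ d ∘ₗ φ.toLinearMap) (Pi.single i 1)
          = (u i : K) • (Pi.single (ρ i) 1 : Fin m → K) ∧
      (φ.symm.toLinearMap ∘ₗ d ∘ₗ φ.toLinearMap) (Pi.single (ρ i) 1) = 0)
    (τ : Fin m → Kˣ) :
    (∀ i j : Fin m, conjDiag τ d (Pi.single i 1) j ≠ 0 → i < j ∧ μ j = μ i - 1) ∧
    UnipotentTriangular μ (conjDiagEquiv τ φ).toLinearMap ∧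
    ∀ i : Fin m, i < ρ i →
      (((conjDiagEquiv τ φ).symm.toLinearMap ∘ₗ conjDiag τ d ∘ₗ
          (conjDiagEquiv τ φ).toLinearMap) (Pi.single i 1)
        = ((τ i * u i * (τ (ρ i))⁻¹ : Kˣ) : K) • (Pi.single (ρ i) 1 : Fin m → K)) ∧
      (((conjDiagEquiv τ φ).symm.toLinearMap ∘ₗ conjDiag τ d ∘ₗ
          (conjDiagEquiv τ φ).toLinearMap) (Pi.single (ρ i) 1) = 0) := by
  refine ⟨fun i j h => htri i j fun h0 => h ?_, fun i => ⟨?_, fun j hj h => ?_⟩, fun i hi => ?_⟩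
  · rw [conjDiag_single_apply, h0, mul_zero, mul_zero]
  · change conjDiag τ φ.toLinearMap (Pi.single i 1) i = 1
    rw [conjDiag_single_apply, (hφ i).1, mul_one, Units.inv_mul]
  · refine (hφ i).2 j hj fun h0 => h ?_
    change conjDiag τ φ.toLinearMap (Pi.single i 1) j = 0
    rw [conjDiag_single_apply, h0, mul_zero, mul_zero]
  · obtain ⟨h1, h2⟩ := hnorm i hi
    rw [conjDiagEquiv_symm_comp_conjDiag_comp]
    constructor
    · ext j
      rw [conjDiag_single_apply, h1]
      by_cases hj : j = ρ i
      · subst hj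
        simp only [Pi.smul_apply, Pi.single_eq_same, smul_eq_mul, Units.val_mul]
        ring
      · simp [hj]
    · ext j
      rw [conjDiag_single_apply, h2]
      simp
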